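/- For every infinite cardinal κ there exists a hereditarily indecomposable continuum K of weight κ that admits an essential continuous map onto the Tychonoff cube [0,1]^κ. -/

import Mathlib

open Set

/-- A space is *hereditarily indecomposable* if whenever two subcontinua
(nonempty compact connected subsets) intersect, one is contained in the other. -/
def HereditarilyIndecomposable (X : Type*) [TopologicalSpace X] : Prop :=
  ∀ C D : Set X, IsCompact C → IsConnected C → IsCompact D → IsConnected D →
    (C ∩ D).Nonempty → C ⊆ D ∨ D ⊆ C

/-- `L` is a partition between `A` and `B`: a closed set whose complement is the
union of two disjoint open sets containing `A` and `B` respectively. -/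
def IsPartitionBetween {X : Type*} [TopologicalSpace X] (L A B : Set X) : Prop :=
  IsClosed L ∧ ∃ U V : Set X, IsOpen U ∧ IsOpen V ∧ Disjoint U V ∧
    A ⊆ U ∧ B ⊆ V ∧ Lᶜ = U ∪ V

/-- A family of pairs of disjoint closed sets is *essential* if every choice of
partitions between the pairs has nonempty intersection. -/
def IsEssentialFamily {X : Type*} [TopologicalSpace X] {I : Type*} (A B : I → Set X) : Prop :=
  (∀ i, IsClosed (A i)) ∧ (∀ i, IsClosed (B i)) ∧ (∀ i, Disjoint (A i) (B i)) ∧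
    ∀ L : I → Set X, (∀ i, IsPartitionBetween (L i) (A i) (B i)) → (⋂ i, L i).Nonempty

/-- The weight of a topological space: the least cardinality of a base. -/
noncomputable def topWeight (X : Type*) [TopologicalSpace X] : Cardinal :=
  ⨅ B : {B : Set (Set X) // TopologicalSpace.IsTopologicalBasis B}, Cardinal.mk B.1

/-!
Inside the cube `[0, 1] ^ (A ⊕ A)`, with the second half of the coordinates indexing a dense family
`e` of continuous functions from this cube to `[0, 1]`, impose the equations
`zigzag (x (inr a)) = e a x`, where `zigzag` is a cubic polynomial making one fold. By the
Poincaré–Miranda theorem the solution set is essential for the pairs of faces of the first half of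
the coordinates, since each equation has the right signs on the faces in the direction `inr a`.

A minimal closed essential subset `K` of the solution set is connected, because if a disjoint union
of two closed sets is essential, then so is one of them. It is hereditarily indecomposable: every
continuous function on `K` is approximated by some `e a`, so it lifts approximately through
`zigzag`, while a function separating two crossing subcontinua does not. The first half of the
coordinates is the essential map. The faces bound the weight of `K` from below and a dense family of
functions bounds it from above.

The Poincaré–Miranda theorem comes from a cubical Sperner lemma: modulo two, the number of grid
cubes counted by the cup product of the coboundaries of the labellings is computed by a discrete
Stokes formula, one direction at a time.
-/

universe u

section CubicalSperner

variable {ι R : Type*} [DecidableEq ι] [CommRing R]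

/-- The cup product of the coboundaries of a list of vertex labellings of the grid `ℕ ^ ι`,
evaluated on the cube spanned by the directions `S` at the vertex `x`. No orientation signs are
inserted, so that this behaves as a cup product only in characteristic two. -/
def cupCoboundary : List ((ι → ℕ) → R) → Finset ι → (ι → ℕ) → R
  | [], S, _ => if S = ∅ then 1 else 0
  | l :: ls, S, x =>
    ∑ k ∈ S, (l (x + Pi.single k 1) - l x) * cupCoboundary ls (S.erase k) (x + Pi.single k 1)

lemma cupCoboundary_eq_zero_of_const {ls : List ((ι → ℕ) → R)} {l : (ι → ℕ) → R} (hl : l ∈ ls)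
    {S : Finset ι} {x : ι → ℕ}
    (hconst : ∀ y ∈ Icc x (x + ∑ k ∈ S, Pi.single k 1), l y = l x) :
    cupCoboundary ls S x = 0 := by
  induction ls generalizing S x with
  | nil => simp at hl
  | cons l' ls ih =>
    refine Finset.sum_eq_zero fun k hk => ?_
    have far_corner : x + Pi.single k 1 + ∑ j ∈ S.erase k, Pi.single j 1
        = x + ∑ j ∈ S, Pi.single j 1 := by
      rw [add_assoc, Finset.add_sum_erase S (fun j => (Pi.single j 1 : ι → ℕ)) hk]
    have hstep : l (x + Pi.single k 1) = l x :=
      hconst _ ⟨le_self_add, far_corner ▸ le_self_add⟩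
    rcases List.mem_cons.1 hl with rfl | hl
    · rw [hstep, sub_self, zero_mul]
    · rw [ih hl fun y hy => ?_, mul_zero]
      rw [hstep]
      exact hconst y ⟨le_self_add.trans hy.1, far_corner ▸ hy.2⟩

lemma sum_sum_erase_eq_zero_of_symm {M : Type*} [Semiring M] [CharP M 2] (S : Finset ι)
    {F : ι → ι → M} (hF : ∀ j k, F j k = F k j) :
    ∑ k ∈ S, ∑ j ∈ S.erase k, F k j = 0 := by
  rw [Finset.sum_sigma']
  refine Finset.sum_involution (fun a _ => ⟨a.2, a.1⟩) ?_ ?_ ?_ fun _ _ => rfl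
  · intro a _
    rw [hF a.2 a.1, CharTwo.add_self_eq_zero]
  · rintro a ha - hswap
    simp only [Finset.mem_sigma, Finset.mem_erase] at ha
    exact ha.2.1 (congrArg Sigma.fst hswap)
  · intro a ha
    simp only [Finset.mem_sigma, Finset.mem_erase] at ha ⊢
    exact ⟨ha.2.2, ha.2.1.symm, ha.1⟩

/-- A cup product of coboundaries is a cocycle. -/
lemma sum_cupCoboundary_erase_sub_eq_zero [CharP R 2] (ls : List ((ι → ℕ) → R)) (S : Finset ι)
    (x : ι → ℕ) :
    ∑ k ∈ S, (cupCoboundary ls (S.erase k) (x + Pi.single k 1)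
      - cupCoboundary ls (S.erase k) x) = 0 := by
  induction ls generalizing S x with
  | nil => exact Finset.sum_eq_zero fun k _ => sub_self _
  | cons l ls ih =>
    let w (k j : ι) : (ι → ℕ) → R := cupCoboundary ls ((S.erase k).erase j)
    have w_symm (k j : ι) : w k j = w j k := by simp only [w, Finset.erase_right_comm]
    let e (k : ι) : ι → ℕ := Pi.single k 1
    let mixed (k j : ι) : R :=
      (l (x + e k + e j) - l (x + e k) - (l (x + e j) - l x)) * w k j (x + e k + e j)
    let outer (k j : ι) : R :=
      (l (x + e j) - l x) * (w k j (x + e j + e k) - w k j (x + e j))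
    have hsplit : ∀ k ∈ S, cupCoboundary (l :: ls) (S.erase k) (x + e k)
        - cupCoboundary (l :: ls) (S.erase k) x
          = ∑ j ∈ S.erase k, mixed k j + ∑ j ∈ S.erase k, outer k j := by
      intro k _
      simp only [cupCoboundary, mixed, outer]
      rw [← Finset.sum_sub_distrib, ← Finset.sum_add_distrib]
      refine Finset.sum_congr rfl fun j _ => ?_
      rw [add_right_comm x (e j) (e k)]
      ring
    have hmixed : ∑ k ∈ S, ∑ j ∈ S.erase k, mixed k j = 0 := by
      refine sum_sum_erase_eq_zero_of_symm S fun j k => ?_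
      simp only [mixed, w_symm j k, add_right_comm x (e j) (e k)]
      ring
    have houter : ∑ k ∈ S, ∑ j ∈ S.erase k, outer k j = 0 := by
      rw [Finset.sum_comm' (t' := S) (s' := fun j => S.erase j) (by grind)]
      refine Finset.sum_eq_zero fun j _ => ?_
      simp only [outer, w_symm _ j]
      rw [← Finset.mul_sum, ih (S.erase j) (x + e j), mul_zero]
    rw [Finset.sum_congr rfl hsplit, Finset.sum_add_distrib, hmixed, houter, add_zero]

/-- The coboundary of `l` times a cocycle `z` is the coboundary of `l * z`. -/
lemma cupCoboundary_cons_eq_sum_sub [CharP R 2] (l : (ι → ℕ) → R) (ls : List ((ι → ℕ) → R))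
    (S : Finset ι) (x : ι → ℕ) :
    cupCoboundary (l :: ls) S x = ∑ k ∈ S,
      ((l * cupCoboundary ls (S.erase k)) (x + Pi.single k 1)
        - (l * cupCoboundary ls (S.erase k)) x) := by
  rw [cupCoboundary, ← add_zero (∑ k ∈ S, _), ← mul_zero (l x),
    ← sum_cupCoboundary_erase_sub_eq_zero ls S x, Finset.mul_sum, ← Finset.sum_add_distrib]
  refine Finset.sum_congr rfl fun k _ => ?_
  simp only [Pi.mul_apply]
  ring

/-- Restriction of functions on the grid `ℕ ^ ι` to the hyperplane `x k = m`, extended constantly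
in the direction `k`. -/
def restrictAt (k : ι) (m : ℕ) : Module.End R ((ι → ℕ) → R) :=
  LinearMap.funLeft R R fun x => Function.update x k m

lemma restrictAt_apply (k : ι) (m : ℕ) (f : (ι → ℕ) → R) (x : ι → ℕ) :
    restrictAt k m f x = f (Function.update x k m) := rfl

lemma restrictAt_mul (k : ι) (m : ℕ) (f g : (ι → ℕ) → R) :
    restrictAt k m (f * g) = restrictAt k m f * restrictAt k m g := rfl

lemma commute_restrictAt {j k : ι} (hjk : j ≠ k) (m n : ℕ) :
    Commute (restrictAt j m : Module.End R ((ι → ℕ) → R)) (restrictAt k n) := by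
  ext f x
  simp only [Module.End.mul_apply, restrictAt_apply, Function.update_comm hjk]

/-- The operator summing a function on the grid `ℕ ^ ι` over the values `x k < N`. -/
def sumAlong (N : ℕ) (k : ι) : Module.End R ((ι → ℕ) → R) :=
  ∑ m ∈ Finset.range N, restrictAt k m

lemma commute_restrictAt_sumAlong {j k : ι} (hjk : j ≠ k) (m N : ℕ) :
    Commute (restrictAt j m : Module.End R ((ι → ℕ) → R)) (sumAlong N k) :=
  Commute.sum_right _ _ _ fun n _ => commute_restrictAt hjk m n

lemma pairwise_commute_sumAlong (N : ℕ) (S : Finset ι) :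
    (S : Set ι).Pairwise
      (Function.onFun Commute (sumAlong N : ι → Module.End R ((ι → ℕ) → R))) :=
  fun _ _ _ _ hjk => Commute.sum_left _ _ _ fun m _ => commute_restrictAt_sumAlong hjk m N

lemma sumAlong_sub_shift (N : ℕ) (k : ι) (f : (ι → ℕ) → R) :
    sumAlong N k (fun x => f (x + Pi.single k 1) - f x)
      = restrictAt k N f - restrictAt k 0 f := by
  have update_add_single (x : ι → ℕ) (m : ℕ) :
      Function.update x k m + Pi.single k 1 = Function.update x k (m + 1) := by
    ext j
    rcases eq_or_ne j k with rfl | hj <;> simp [*]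
  ext x
  simp only [sumAlong, LinearMap.sum_apply, Finset.sum_apply, restrictAt_apply, Pi.sub_apply,
    update_add_single]
  exact Finset.sum_range_sub (fun m => f (Function.update x k m)) N

/-- The operator summing a function on the grid `ℕ ^ ι` over the values `x k < N` for all `k`
in `S`. -/
def gridSum (N : ℕ) (S : Finset ι) : Module.End R ((ι → ℕ) → R) :=
  S.noncommProd (sumAlong N) (pairwise_commute_sumAlong N S)

lemma gridSum_sub_shift (N : ℕ) {S : Finset ι} {k : ι} (hk : k ∈ S) (f : (ι → ℕ) → R) :
    gridSum N S (fun x => f (x + Pi.single k 1) - f x)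
      = gridSum N (S.erase k) (restrictAt k N f - restrictAt k 0 f) := by
  rw [gridSum, ← Finset.noncommProd_erase_mul S hk, Module.End.mul_apply, sumAlong_sub_shift]
  rfl

lemma commute_restrictAt_gridSum (N : ℕ) {S : Finset ι} {k : ι} (hk : k ∉ S) (m : ℕ) :
    Commute (restrictAt k m : Module.End R ((ι → ℕ) → R)) (gridSum N S) :=
  Finset.noncommProd_commute _ _ _ _ fun _ hj =>
    commute_restrictAt_sumAlong (ne_of_mem_of_not_mem hj hk).symm m N

lemma gridSum_cupCoboundary_cons [CharP R 2] (N : ℕ) (l : (ι → ℕ) → R)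
    (ls : List ((ι → ℕ) → R)) (S : Finset ι) :
    gridSum N S (cupCoboundary (l :: ls) S) = ∑ k ∈ S, gridSum N (S.erase k)
      (restrictAt k N (l * cupCoboundary ls (S.erase k))
        - restrictAt k 0 (l * cupCoboundary ls (S.erase k))) := by
  rw [funext (cupCoboundary_cons_eq_sum_sub l ls S), ← Finset.sum_fn, map_sum]
  exact Finset.sum_congr rfl fun k hk => gridSum_sub_shift N hk _

lemma restrictAt_cupCoboundary_eq_zero {ls : List ((ι → ℕ) → R)} {l : (ι → ℕ) → R} (hl : l ∈ ls)
    {S : Finset ι} {k : ι} (hk : k ∉ S) {m : ℕ} {c : R} (hconst : ∀ y, y k = m → l y = c) :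
    restrictAt k m (cupCoboundary ls S) = 0 := by
  ext x
  refine cupCoboundary_eq_zero_of_const hl fun y hy => ?_
  have hyk : y k = m := by
    have cube_flat : (∑ j ∈ S, Pi.single j 1 : ι → ℕ) k = 0 := by
      rw [Finset.sum_apply]
      exact Finset.sum_eq_zero fun j hj => Pi.single_eq_of_ne (ne_of_mem_of_not_mem hj hk).symm 1
    have hupper := hy.2 k
    rw [Pi.add_apply, cube_flat, add_zero] at hupper
    exact (le_antisymm hupper (hy.1 k)).trans (Function.update_self ..)
  rw [hconst y hyk, hconst _ (Function.update_self ..)]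

/-- By the discrete Stokes formula `gridSum_cupCoboundary_cons`, only the face `x i = N` for the
first direction `i` contributes. -/
lemma gridSum_cupCoboundary_eq_one [CharP R 2] {N : ℕ} {l : ι → (ι → ℕ) → R}
    (h₀ : ∀ i y, y i = 0 → l i y = 0) (h₁ : ∀ i y, y i = N → l i y = 1)
    {ks : List ι} (hks : ks.Nodup) :
    gridSum N ks.toFinset (cupCoboundary (ks.map l) ks.toFinset) = 1 := by
  induction ks with
  | nil => ext x; simp [gridSum, cupCoboundary]
  | cons i ks ih =>
    obtain ⟨hi, hks⟩ := List.nodup_cons.1 hks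
    set S := (i :: ks).toFinset with hS
    have hiS : i ∈ S := by simp [hS]
    have erase_head : S.erase i = ks.toFinset := by simp [hS, hi]
    have other_faces : ∀ k ∈ S, k ≠ i → ∀ {m c}, (∀ y, y k = m → l k y = c) →
        restrictAt k m (l i * cupCoboundary (ks.map l) (S.erase k)) = 0 := by
      intro k hk hki m c hc
      have hmem : l k ∈ ks.map l := List.mem_map_of_mem (by simpa [hS, hki] using hk)
      rw [restrictAt_mul, restrictAt_cupCoboundary_eq_zero hmem (Finset.notMem_erase k S) hc,
        mul_zero]
    have head_bottom : restrictAt i 0 (l i) = 0 :=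
      funext fun x => h₀ i _ (Function.update_self ..)
    have head_top : restrictAt i N (l i) = 1 :=
      funext fun x => h₁ i _ (Function.update_self ..)
    calc gridSum N S (cupCoboundary (l i :: ks.map l) S)
        = gridSum N (S.erase i) (restrictAt i N (l i * cupCoboundary (ks.map l) (S.erase i))
            - restrictAt i 0 (l i * cupCoboundary (ks.map l) (S.erase i))) := by
          rw [gridSum_cupCoboundary_cons]
          refine Finset.sum_eq_single_of_mem i hiS fun k hk hki => ?_
          rw [other_faces k hk hki (h₁ k), other_faces k hk hki (h₀ k), sub_zero, map_zero]
      _ = gridSum N ks.toFinset (restrictAt i N (cupCoboundary (ks.map l) ks.toFinset)) := by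
          rw [erase_head, restrictAt_mul, restrictAt_mul, head_top, head_bottom, one_mul, zero_mul,
            sub_zero]
      _ = restrictAt i N (gridSum N ks.toFinset (cupCoboundary (ks.map l) ks.toFinset)) :=
          (LinearMap.congr_fun (commute_restrictAt_gridSum N (by simpa using hi) N).eq _).symm
      _ = 1 := by rw [ih hks]; rfl

end CubicalSperner

/-- A cubical Sperner lemma, due to Kuhn. -/
lemma exists_Icc_forall_mem_and_notMem {ι : Type*} [Finite ι] {N : ℕ} {A : ι → Set (ι → ℕ)}
    (h₀ : ∀ i y, y i = 0 → y ∉ A i) (h₁ : ∀ i y, y i = N → y ∈ A i) :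
    ∃ x : ι → ℕ, ∀ i, (∃ y ∈ Icc x (x + 1), y ∈ A i) ∧ ∃ z ∈ Icc x (x + 1), z ∉ A i := by
  classical
  have := Fintype.ofFinite ι
  let l (i : ι) : (ι → ℕ) → ZMod 2 := (A i).indicator 1
  have total := gridSum_cupCoboundary_eq_one (l := l)
    (fun i y hy => indicator_of_notMem (h₀ i y hy) 1) (fun i y hy => indicator_of_mem (h₁ i y hy) 1)
    (Finset.univ : Finset ι).nodup_toList
  rw [Finset.toList_toFinset] at total
  by_contra! hcell
  have hconst (x : ι → ℕ) : ∃ i, ∀ y ∈ Icc x (x + 1), l i y = l i x := by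
    have hx : x ∈ Icc x (x + 1) := ⟨le_rfl, le_self_add⟩
    obtain ⟨i, hi⟩ := hcell x
    refine ⟨i, fun y hy => ?_⟩
    have same_label : y ∈ A i ↔ x ∈ A i :=
      ⟨fun h => hi ⟨y, hy, h⟩ x hx, fun h => hi ⟨x, hx, h⟩ y hy⟩
    simp only [l, indicator_apply, Pi.one_apply, same_label]
  have hzero : cupCoboundary (Finset.univ.toList.map l) Finset.univ = 0 := by
    ext x
    obtain ⟨i, hi⟩ := hconst x
    have all_directions : ∑ k, Pi.single k 1 = (1 : ι → ℕ) := Finset.univ_sum_single 1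
    refine cupCoboundary_eq_zero_of_const (l := l i) (List.mem_map_of_mem (by simp)) ?_
    rwa [all_directions]
  rw [hzero, map_zero] at total
  exact zero_ne_one total

/-- The set `K` is essential for the pairs `(A i, B i)`: continuous functions `g i` which are
nonpositive on `A i` and nonnegative on `B i` have a common zero in `K`. The zero sets of the `g i`
play the role of the partitions in `IsEssentialFamily`; the weak inequalities make the notion stable
under intersections of chains and under convex combinations. -/
def EssentialOn {X ι : Type*} [TopologicalSpace X] (K : Set X) (A B : ι → Set X) : Prop :=
  ∀ g : ι → C(X, ℝ), (∀ i, ∀ x ∈ A i, g i x ≤ 0) → (∀ i, ∀ x ∈ B i, 0 ≤ g i x) →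
    ∃ x ∈ K, ∀ i, g i x = 0

section PoincareMiranda

variable {ι : Type*}

/-- The point of the unit cube with coordinates `y i / N`, truncated to `[0, 1]`. -/
noncomputable def gridPoint (N : ℕ) (y : ι → ℕ) : ι → unitInterval :=
  fun i => projIcc 0 1 zero_le_one (y i / N : ℝ)

lemma gridPoint_apply_of_eq_zero (N : ℕ) {y : ι → ℕ} {i : ι} (h : y i = 0) :
    gridPoint N y i = 0 :=
  projIcc_of_le_left _ (by simp [h])

lemma gridPoint_apply_of_eq {N : ℕ} (hN : N ≠ 0) {y : ι → ℕ} {i : ι} (h : y i = N) :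
    gridPoint N y i = 1 :=
  projIcc_of_right_le _ (by simp [h, hN])

lemma dist_gridPoint_le [Fintype ι] (N : ℕ) {x y : ι → ℕ} (hy : y ∈ Icc x (x + 1)) :
    dist (gridPoint N y) (gridPoint N x) ≤ 1 / N := by
  refine (dist_pi_le_iff (by positivity)).2 fun i => ?_
  have hlower : (x i : ℝ) ≤ y i := mod_cast hy.1 i
  have hupper : (y i : ℝ) ≤ x i + 1 := mod_cast hy.2 i
  calc dist (gridPoint N y i) (gridPoint N x i)
      ≤ |(y i / N : ℝ) - x i / N| := abs_projIcc_sub_projIcc zero_le_one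
    _ = |(y i - x i : ℝ)| / N := by rw [← sub_div, abs_div, Nat.abs_cast]
    _ ≤ 1 / N := by gcongr; exact abs_le.2 ⟨by linarith, by linarith⟩

lemma exists_forall_abs_le_of_faces [Finite ι] {g : ι → C(ι → unitInterval, ℝ)}
    (h₀ : ∀ i x, x i = 0 → g i x ≤ 0) (h₁ : ∀ i x, x i = 1 → 0 ≤ g i x) {ε : ℝ} (hε : 0 < ε) :
    ∃ x, ∀ i, |g i x| ≤ ε := by
  have := Fintype.ofFinite ι
  have huc : UniformContinuous fun x i => g i x :=
    CompactSpace.uniformContinuous_of_continuous (by fun_prop)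
  obtain ⟨δ, hδ, hclose⟩ := Metric.uniformContinuous_iff.1 huc ε hε
  obtain ⟨n, hn⟩ := exists_nat_one_div_lt hδ
  let p : (ι → ℕ) → ι → unitInterval := gridPoint (n + 1)
  obtain ⟨x, hx⟩ := exists_Icc_forall_mem_and_notMem (N := n + 1)
    (A := fun i => {y | y i ≠ 0 ∧ 0 ≤ g i (p y)}) (fun i y hy h => h.1 hy) fun i y hy =>
      ⟨by simp [hy], h₁ i _ (gridPoint_apply_of_eq n.succ_ne_zero hy)⟩
  have hcell (i : ι) {y : ι → ℕ} (hy : y ∈ Icc x (x + 1)) : |g i (p y) - g i (p x)| < ε :=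
    (dist_le_pi_dist _ _ i).trans_lt (hclose ((dist_gridPoint_le _ hy).trans_lt (mod_cast hn)))
  refine ⟨p x, fun i => ?_⟩
  obtain ⟨⟨y, hy, -, hgy⟩, z, hz, hgz⟩ := hx i
  have hgz : g i (p z) ≤ 0 := by
    by_cases hzi : z i = 0
    · exact h₀ i _ (gridPoint_apply_of_eq_zero _ hzi)
    · exact (not_le.1 fun h => hgz ⟨hzi, h⟩).le
  have := abs_lt.1 (hcell i hy)
  have := abs_lt.1 (hcell i hz)
  exact abs_le.2 ⟨by linarith, by linarith⟩

/-- The Poincaré–Miranda theorem. -/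
lemma exists_forall_eq_zero_of_faces [Finite ι] {g : ι → C(ι → unitInterval, ℝ)}
    (h₀ : ∀ i x, x i = 0 → g i x ≤ 0) (h₁ : ∀ i x, x i = 1 → 0 ≤ g i x) :
    ∃ x, ∀ i, g i x = 0 := by
  have := Fintype.ofFinite ι
  let G (x : ι → unitInterval) : ι → ℝ := fun i => g i x
  have hG : Continuous fun x => ‖G x‖ := by fun_prop
  obtain ⟨x, -, hmin⟩ := isCompact_univ.exists_isMinOn univ_nonempty hG.continuousOn
  have hle : ‖G x‖ ≤ 0 := by
    refine le_of_forall_pos_le_add fun ε hε => ?_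
    obtain ⟨y, hy⟩ := exists_forall_abs_le_of_faces h₀ h₁ hε
    calc ‖G x‖ ≤ ‖G y‖ := hmin (mem_univ y)
      _ ≤ ε := (pi_norm_le_iff_of_nonneg hε.le).2 hy
      _ = 0 + ε := (zero_add ε).symm
  exact ⟨x, congrFun (norm_le_zero_iff.1 hle)⟩

lemma essentialOn_univ_cube (ι : Type*) :
    EssentialOn (univ : Set (ι → unitInterval)) (fun i => {x | x i = 0})
      fun i => {x | x i = 1} := by
  classical
  intro g h₀ h₁
  have hzeros : (⋂ i, {x | g i x = 0}).Nonempty := by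
    refine CompactSpace.iInter_nonempty (fun i => isClosed_eq (g i).continuous continuous_const)
      fun s => ?_
    let extend : C(s → unitInterval, ι → unitInterval) :=
      ⟨fun x i => if h : i ∈ s then x ⟨i, h⟩ else 0,
        continuous_pi fun i => by split_ifs <;> fun_prop⟩
    have extend_apply (x : s → unitInterval) (i : s) : extend x i = x i := dif_pos i.2
    obtain ⟨x, hx⟩ := exists_forall_eq_zero_of_faces (g := fun i : s => (g i).comp extend)
      (fun i x hx => h₀ i _ ((extend_apply x i).trans hx))
      fun i x hx => h₁ i _ ((extend_apply x i).trans hx)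
    exact ⟨extend x, mem_iInter₂.2 fun i hi => hx ⟨i, hi⟩⟩
  obtain ⟨x, hx⟩ := hzeros
  exact ⟨x, mem_univ x, fun i => mem_iInter.1 hx i⟩

end PoincareMiranda

namespace EssentialOn

variable {X ι : Type*} [TopologicalSpace X] {K L : Set X} {A B : ι → Set X}

lemma nonempty (h : EssentialOn K A B) : K.Nonempty :=
  (h 0 (fun _ _ _ => le_rfl) fun _ _ _ => le_rfl).imp fun _ hx => hx.1

lemma exists_minimal [CompactSpace X] (hK : IsClosed K) (h : EssentialOn K A B) :
    ∃ M ⊆ K, Minimal (fun M => IsClosed M ∧ EssentialOn M A B) M := by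
  refine zorn_superset_nonempty {M | IsClosed M ∧ EssentialOn M A B} ?_ K ⟨hK, h⟩
  intro c hc hchain hne
  refine ⟨⋂₀ c, ⟨isClosed_sInter fun M hM => (hc hM).1, fun g hA hB => ?_⟩,
    fun M hM => sInter_subset_of_mem hM⟩
  have := hne.to_subtype
  have hdir : Directed (· ⊇ ·) fun M : c => (M : Set X) :=
    (show IsChain (· ⊇ ·) c from hchain.symm).directedOn.directed_val
  let Z : Set X := {x | ∀ i, g i x = 0}
  have hZ : IsClosed Z := by
    simp only [Z, ofPred_forall]
    exact isClosed_iInter fun i => isClosed_eq (g i).continuous continuous_const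
  have hclosed (M : c) : IsClosed (M ∩ Z) := (hc M.2).1.inter hZ
  obtain ⟨x, hx⟩ := IsCompact.nonempty_iInter_of_directed_nonempty_isCompact_isClosed
    (fun M : c => (M : Set X) ∩ Z)
    (hdir.mono_comp _ (g := (· ∩ Z)) fun _ _ => inter_subset_inter_left Z)
    (fun M => (hc M.2).2 g hA hB) (fun M => (hclosed M).isCompact) hclosed
  rw [← iInter_inter, ← sInter_eq_iInter] at hx
  exact ⟨x, hx.1, hx.2⟩

lemma or_of_union [NormalSpace X] (hK : IsClosed K) (hL : IsClosed L) (hKL : Disjoint K L)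
    (h : EssentialOn (K ∪ L) A B) : EssentialOn K A B ∨ EssentialOn L A B := by
  by_contra! hnot
  simp only [EssentialOn, not_forall] at hnot
  obtain ⟨⟨g, hgA, hgB, hg⟩, g', hgA', hgB', hg'⟩ := hnot
  obtain ⟨φ, hφK, hφL, hφ⟩ := exists_continuous_zero_one_of_isClosed hK hL hKL
  obtain ⟨x, hx, hzero⟩ := h (fun i => (1 - φ) * g i + φ * g' i)
    (fun i x hx => add_nonpos
      (mul_nonpos_of_nonneg_of_nonpos (sub_nonneg.2 (hφ x).2) (hgA i x hx))
      (mul_nonpos_of_nonneg_of_nonpos (hφ x).1 (hgA' i x hx)))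
    fun i x hx => add_nonneg (mul_nonneg (sub_nonneg.2 (hφ x).2) (hgB i x hx))
      (mul_nonneg (hφ x).1 (hgB' i x hx))
  rcases hx with hx | hx
  · exact hg ⟨x, hx, fun i => by simpa [hφK hx] using hzero i⟩
  · exact hg' ⟨x, hx, fun i => by simpa [hφL hx] using hzero i⟩

lemma isConnected_of_minimal [NormalSpace X]
    (hK : Minimal (fun K => IsClosed K ∧ EssentialOn K A B) K) : IsConnected K := by
  refine ⟨hK.prop.2.nonempty,
    (isPreconnected_iff_subset_of_fully_disjoint_closed hK.prop.1).2 ?_⟩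
  intro C D hC hD hcover hdisj
  have hsplit : EssentialOn (K ∩ C ∪ K ∩ D) A B := by
    rw [← inter_union_distrib_left, inter_eq_left.2 hcover]
    exact hK.prop.2
  refine (hsplit.or_of_union (hK.prop.1.inter hC) (hK.prop.1.inter hD)
    (hdisj.mono inter_subset_right inter_subset_right)).imp (fun h => ?_) fun h => ?_
  · exact (hK.le_of_le ⟨hK.prop.1.inter hC, h⟩ inter_subset_left).trans inter_subset_right
  · exact (hK.le_of_le ⟨hK.prop.1.inter hD, h⟩ inter_subset_left).trans inter_subset_right

lemma surjective_restrict {f : C(X, ι → unitInterval)}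
    (h : EssentialOn K (fun i => {x | f x i = 0}) fun i => {x | f x i = 1}) :
    Function.Surjective (f.restrict K) := by
  intro p
  obtain ⟨x, hx, hzero⟩ := h (fun i => ⟨fun x => f x i - p i, by fun_prop⟩)
    (fun i x hx => sub_nonpos.2 (by rw [hx]; exact (p i).2.1))
    fun i x hx => sub_nonneg.2 (by rw [hx]; exact (p i).2.2)
  exact ⟨⟨x, hx⟩, funext fun i => Subtype.ext (sub_eq_zero.1 (hzero i))⟩

end EssentialOn

lemma IsPartitionBetween.exists_continuousMap_ne_zero {X : Type*} [TopologicalSpace X]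
    [NormalSpace X] {K A B : Set X} (hK : IsClosed K) (hA : IsClosed A) (hB : IsClosed B)
    (hAB : Disjoint A B)
    {L : Set K} (hL : IsPartitionBetween L (Subtype.val ⁻¹' A) (Subtype.val ⁻¹' B))
    {W : Set K} (hW : IsClosed W) (hWL : W ⊆ Lᶜ) :
    ∃ g : C(X, ℝ), (∀ x ∈ A, g x ≤ 0) ∧ (∀ x ∈ B, 0 ≤ g x) ∧ ∀ x ∈ W, g x ≠ 0 := by
  obtain ⟨-, U, V, hU, hV, hUV, hAU, hBV, hLUV⟩ := hL
  have hWUV : W ⊆ U ∪ V := hLUV ▸ hWL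
  have hclosed {F : Set K} (hF : IsClosed F) : IsClosed (Subtype.val '' F) :=
    hK.isClosedEmbedding_subtypeVal.isClosedMap F hF
  have hdisj : Disjoint (A ∪ Subtype.val '' (W \ V)) (B ∪ Subtype.val '' (W \ U)) := by
    simp only [disjoint_union_left, disjoint_union_right]
    refine ⟨⟨hAB, ?_⟩, ?_, ?_⟩
    · exact disjoint_image_left.2 (disjoint_sdiff_left.mono_right hBV)
    · exact disjoint_image_right.2 (disjoint_sdiff_right.mono_left hAU)
    · exact (disjoint_image_iff Subtype.val_injective).2
        (disjoint_left.2 fun x hxV hxU => (hWUV hxV.1).elim hxU.2 hxV.2)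
  obtain ⟨φ, hφ₀, hφ₁, -⟩ := exists_continuous_zero_one_of_isClosed
    (hA.union (hclosed (hW.sdiff hV))) (hB.union (hclosed (hW.sdiff hU))) hdisj
  refine ⟨φ - .const X (1 / 2), fun x hx => ?_, fun x hx => ?_, fun x hx => ?_⟩
  · norm_num [hφ₀ (Or.inl hx)]
  · norm_num [hφ₁ (Or.inl hx)]
  · by_cases hxV : x ∈ V
    · norm_num [hφ₁ (Or.inr (mem_image_of_mem _ ⟨hx, disjoint_right.1 hUV hxV⟩))]
    · norm_num [hφ₀ (Or.inr (mem_image_of_mem _ ⟨hx, hxV⟩))]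

lemma EssentialOn.isEssentialFamily {X ι : Type*} [TopologicalSpace X] [CompactSpace X] [T2Space X]
    {K : Set X} {A B : ι → Set X} (h : EssentialOn K A B) (hK : IsClosed K)
    (hA : ∀ i, IsClosed (A i)) (hB : ∀ i, IsClosed (B i)) (hAB : ∀ i, Disjoint (A i) (B i)) :
    IsEssentialFamily (fun i => (Subtype.val ⁻¹' A i : Set K)) fun i => Subtype.val ⁻¹' B i := by
  have := isCompact_iff_compactSpace.1 hK.isCompact
  refine ⟨fun i => (hA i).preimage continuous_subtype_val,
    fun i => (hB i).preimage continuous_subtype_val, fun i => (hAB i).preimage _, fun L hL => ?_⟩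
  by_contra hempty
  have hcover : (univ : Set K) ⊆ ⋃ i, (L i)ᶜ := by
    rw [← compl_iInter, not_nonempty_iff_eq_empty.1 hempty, compl_empty]
  obtain ⟨t, ht⟩ := isCompact_univ.elim_finite_subcover _ (fun i => (hL i).1.isOpen_compl) hcover
  obtain ⟨W, hW, hWL, hWcover⟩ := isCompact_univ.finite_compact_cover t (fun i => (L i)ᶜ)
    (fun i _ => (hL i).1.isOpen_compl) ht
  choose g hgA hgB hgW using fun i =>
    (hL i).exists_continuousMap_ne_zero hK (hA i) (hB i) (hAB i) (hW i).isClosed (hWL i)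
  obtain ⟨x, hxK, hx⟩ := h g hgA hgB
  obtain ⟨i, -, hi⟩ := mem_iUnion₂.1 (hWcover ▸ mem_univ (⟨x, hxK⟩ : K))
  exact hgW i _ hi (hx i)

section StoneWeierstrass

open ContinuousMap

variable {X : Type*} [TopologicalSpace X] [CompactSpace X]

lemma rat_subalgebra_topologicalClosure_eq_top_of_separatesPoints {S : Subalgebra ℚ C(X, ℝ)}
    (hS : S.SeparatesPoints) : S.topologicalClosure = ⊤ := by
  have hconst (r : ℝ) : algebraMap ℝ C(X, ℝ) r ∈ closure (S : Set C(X, ℝ)) := by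
    refine map_mem_closure (by fun_prop) (Rat.denseRange_cast r) ?_
    rintro _ ⟨q, rfl⟩
    exact S.algebraMap_mem q
  let T : Subalgebra ℝ C(X, ℝ) :=
    { S.topologicalClosure.toSubsemiring with algebraMap_mem' := hconst }
  have hT : T.SeparatesPoints := fun x y hxy => by
    obtain ⟨_, ⟨f, hf, rfl⟩, hne⟩ := hS hxy
    exact ⟨f, ⟨f, subset_closure hf, rfl⟩, hne⟩
  have hT_top := subalgebra_topologicalClosure_eq_top_of_separatesPoints T hT
  refine Algebra.eq_top_iff.2 fun f => ?_
  have hf : f ∈ T.topologicalClosure := hT_top ▸ Algebra.mem_top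
  exact isClosed_closure.closure_subset hf

lemma denseRange_aeval_of_separatesPoints {J : Type*} {φ : J → C(X, ℝ)}
    (hφ : Pairwise fun x y => ∃ j, φ j x ≠ φ j y) :
    DenseRange (MvPolynomial.aeval φ : MvPolynomial J ℚ →ₐ[ℚ] C(X, ℝ)) := by
  let S := (MvPolynomial.aeval φ : MvPolynomial J ℚ →ₐ[ℚ] C(X, ℝ)).range
  have hS : S.SeparatesPoints := fun x y hxy => by
    obtain ⟨j, hj⟩ := hφ hxy
    exact ⟨φ j, ⟨φ j, ⟨MvPolynomial.X j, MvPolynomial.aeval_X φ j⟩, rfl⟩, hj⟩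
  intro f
  have hf : f ∈ S.topologicalClosure :=
    rat_subalgebra_topologicalClosure_eq_top_of_separatesPoints hS ▸ Algebra.mem_top
  exact hf

lemma exists_denseRange_continuousMap_unitInterval {A J : Type u} [Infinite A]
    (hJA : Cardinal.mk J ≤ Cardinal.mk A) {F : X → J → unitInterval} (hF : Continuous F)
    (hinj : Function.Injective F) : ∃ e : A → C(X, unitInterval), DenseRange e := by
  let φ (j : J) : C(X, ℝ) := ⟨fun x => F x j, by fun_prop⟩
  have hφ : Pairwise fun x y => ∃ j, φ j x ≠ φ j y := fun x y hxy => by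
    obtain ⟨j, hj⟩ := Function.ne_iff.1 (hinj.ne hxy)
    exact ⟨j, Subtype.coe_ne_coe.2 hj⟩
  have hcard : Cardinal.mk (MvPolynomial J ℚ) ≤ Cardinal.mk A := by
    refine MvPolynomial.cardinalMk_le_max_lift.trans (max_le (max_le ?_ ?_) ?_)
    · simp
    · simpa using hJA
    · exact Cardinal.aleph0_le_mk A
  obtain ⟨embed⟩ := hcard
  have hpoly : DenseRange (MvPolynomial.aeval φ ∘ Function.invFun embed) := by
    rw [DenseRange, (Function.invFun_surjective embed.injective).range_comp]
    exact denseRange_aeval_of_separatesPoints hφ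
  let clamp : C(ℝ, unitInterval) := ⟨projIcc 0 1 zero_le_one, continuous_projIcc⟩
  have hclamp : Function.Surjective (clamp.comp : C(X, ℝ) → C(X, unitInterval)) := fun f =>
    ⟨⟨fun x => f x, by fun_prop⟩, ContinuousMap.ext fun x => projIcc_val zero_le_one (f x)⟩
  exact ⟨_, hclamp.denseRange.comp hpoly (continuous_postcomp clamp)⟩

end StoneWeierstrass

section HereditarilyIndecomposable

/-- A cubic polynomial whose graph over `[0, 1]` is a zigzag: it rises from `0` to `5 / 9` at
`1 / 3`, falls to `4 / 9` at `2 / 3` and rises again to `1`. -/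
def zigzag (t : ℝ) : ℝ := 6 * t ^ 3 - 9 * t ^ 2 + 4 * t

@[fun_prop]
lemma continuous_zigzag : Continuous zigzag := by
  unfold zigzag
  fun_prop

lemma zigzag_one_sub (t : ℝ) : zigzag (1 - t) = 1 - zigzag t := by
  unfold zigzag
  ring

lemma lt_one_sixth_of_zigzag_lt {t : ℝ} (ht : zigzag t < 4 / 9) : t < 1 / 6 := by
  by_contra! h
  have hfactor : zigzag t - 4 / 9 = 6 * (t - 2 / 3) ^ 2 * (t - 1 / 6) := by
    unfold zigzag
    ring
  have hnonneg : 0 ≤ 6 * (t - 2 / 3) ^ 2 * (t - 1 / 6) :=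
    mul_nonneg (by positivity) (sub_nonneg.2 h)
  linarith

variable {X : Type*} [TopologicalSpace X]

/-- On `C` the function `t` starts to the left of the first peak of the zigzag and never reaches
it, as the zigzag would then rise too far above `f`. -/
lemma lt_one_third_of_abs_zigzag_sub_lt {C : Set X} (hC : IsPreconnected C) {f t : X → ℝ}
    (ht : ContinuousOn t C) (hft : ∀ x ∈ C, |zigzag (t x) - f x| < 1 / 18)
    (hfC : ∀ x ∈ C, f x ≤ 1 / 2) {p : X} (hp : p ∈ C) (hfp : f p ≤ 0) {x : X} (hx : x ∈ C) :
    t x < 1 / 3 := by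
  have htp : t p < 1 / 6 := lt_one_sixth_of_zigzag_lt (by linarith [(abs_lt.1 (hft p hp)).2])
  by_contra! htx
  obtain ⟨y, hy, hty⟩ := hC.intermediate_value hp hx ht ⟨by linarith, htx⟩
  have peak : zigzag (t y) = 5 / 9 := by
    rw [hty]
    norm_num [zigzag]
  linarith [(abs_lt.1 (hft y hy)).2, hfC y hy]

lemma exists_continuousMap_le_half_ge_half [T4Space X] {C D : Set X}
    (hC : IsClosed C) (hD : IsClosed D) {p q : X} (hp : p ∈ C \ D) (hq : q ∈ D \ C) :
    ∃ f : C(X, unitInterval), f p = 0 ∧ f q = 1 ∧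
      (∀ x ∈ C, (f x : ℝ) ≤ 1 / 2) ∧ ∀ x ∈ D, (1 / 2 : ℝ) ≤ f x := by
  obtain ⟨a, haD, hap, ha⟩ := exists_continuous_zero_one_of_isClosed hD
    (isClosed_singleton (x := p)) (disjoint_singleton_right.2 hp.2)
  obtain ⟨b, hbC, hbq, hb⟩ := exists_continuous_zero_one_of_isClosed hC
    (isClosed_singleton (x := q)) (disjoint_singleton_right.2 hq.2)
  have hmem (x : X) : (1 - a x + b x) / 2 ∈ unitInterval :=
    ⟨by linarith [(ha x).2, (hb x).1], by linarith [(ha x).1, (hb x).2]⟩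
  refine ⟨⟨fun x => ⟨_, hmem x⟩, by fun_prop⟩, Subtype.ext ?_, Subtype.ext ?_, fun x hx => ?_,
    fun x hx => ?_⟩
  · simp [hap rfl, hbC hp.1]
  · norm_num [haD hq.1, hbq rfl]
  · have : b x = 0 := hbC hx
    simp only [ContinuousMap.coe_mk]
    linarith [(ha x).1]
  · have : a x = 0 := haD hx
    simp only [ContinuousMap.coe_mk]
    linarith [(hb x).1]

lemma hereditarilyIndecomposable_of_forall_exists_zigzag_near [T4Space X]
    (h : ∀ f : C(X, unitInterval), ∃ t : C(X, ℝ), ∀ x, |zigzag (t x) - f x| < 1 / 18) :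
    HereditarilyIndecomposable X := by
  rintro C D hC hC' hD hD' ⟨x, hxC, hxD⟩
  by_contra! hnot
  obtain ⟨⟨p, hp⟩, q, hq⟩ := hnot.imp not_subset.1 not_subset.1
  obtain ⟨f, hfp, hfq, hfC, hfD⟩ :=
    exists_continuousMap_le_half_ge_half hC.isClosed hD.isClosed hp hq
  obtain ⟨t, ht⟩ := h f
  have left : t x < 1 / 3 := lt_one_third_of_abs_zigzag_sub_lt hC'.isPreconnected (by fun_prop)
    (fun x _ => ht x) hfC hp.1 (by simp [hfp]) hxC
  have right : 1 - t x < 1 / 3 :=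
    lt_one_third_of_abs_zigzag_sub_lt hD'.isPreconnected (f := fun x => 1 - f x)
      (t := fun x => 1 - t x) (by fun_prop)
      (fun x _ => by rw [zigzag_one_sub, sub_sub_sub_cancel_left, abs_sub_comm]; exact ht x)
      (fun x hx => by linarith [hfD x hx]) hq.1 (by simp [hfq]) hxD
  linarith

/-- The points of the cube `[0, 1] ^ (ι ⊕ A)` whose coordinate `a : A` lifts `e a` through the
zigzag. -/
def zigzagSet {ι A : Type*} (e : A → C(ι ⊕ A → unitInterval, unitInterval)) :
    Set (ι ⊕ A → unitInterval) :=
  {x | ∀ a, zigzag (x (.inr a)) = e a x}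

section ZigzagSet

variable {ι A : Type*} {e : A → C(ι ⊕ A → unitInterval, unitInterval)}

lemma isClosed_zigzagSet : IsClosed (zigzagSet e) := by
  simp only [zigzagSet, ofPred_forall]
  exact isClosed_iInter fun a => isClosed_eq (by fun_prop) (by fun_prop)

lemma essentialOn_zigzagSet : EssentialOn (zigzagSet e)
    (fun i => {x | x (.inl i) = 0}) fun i => {x | x (.inl i) = 1} := by
  intro g h₀ h₁
  let g' : ι ⊕ A → C(ι ⊕ A → unitInterval, ℝ) :=
    Sum.elim g fun a => ⟨fun x => zigzag (x (.inr a)) - e a x, by fun_prop⟩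
  have bottom (a : A) (x : ι ⊕ A → unitInterval) (hx : x (.inr a) = 0) : g' (.inr a) x ≤ 0 := by
    norm_num [g', zigzag, hx, (e a x).2.1]
  have top (a : A) (x : ι ⊕ A → unitInterval) (hx : x (.inr a) = 1) : 0 ≤ g' (.inr a) x := by
    norm_num [g', zigzag, hx, (e a x).2.2]
  obtain ⟨x, -, hx⟩ := essentialOn_univ_cube (ι ⊕ A) g' (Sum.forall.2 ⟨h₀, bottom⟩)
    (Sum.forall.2 ⟨h₁, top⟩)
  exact ⟨x, fun a => sub_eq_zero.1 (hx (.inr a)), fun i => hx (.inl i)⟩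

lemma hereditarilyIndecomposable_of_subset_zigzagSet (he : DenseRange e)
    {K : Set (ι ⊕ A → unitInterval)} (hK : IsClosed K) (hKe : K ⊆ zigzagSet e) :
    HereditarilyIndecomposable K := by
  have := isCompact_iff_compactSpace.1 hK.isCompact
  refine hereditarilyIndecomposable_of_forall_exists_zigzag_near fun f => ?_
  obtain ⟨F, rfl⟩ := ContinuousMap.exists_restrict_eq hK f
  obtain ⟨a, ha⟩ := he.exists_dist_lt F (show (0 : ℝ) < 1 / 18 by norm_num)
  let coordinate : C(ι ⊕ A → unitInterval, ℝ) := ⟨fun x => x (.inr a), by fun_prop⟩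
  refine ⟨coordinate.restrict K, fun x => ?_⟩
  calc |zigzag (x.1 (.inr a)) - F x| = dist (e a x) (F x) := by rw [hKe x.2 a]; rfl
    _ ≤ dist (e a) F := ContinuousMap.dist_apply_le_dist _
    _ < 1 / 18 := by rwa [dist_comm]

end ZigzagSet

end HereditarilyIndecomposable

section Weight

variable {X ι : Type u} [TopologicalSpace X]

lemma topWeight_le_mk_of_denseRange [CompactSpace X] [CompletelyRegularSpace X]
    {e : ι → C(X, unitInterval)} (he : DenseRange e) : topWeight X ≤ Cardinal.mk ι := by
  let U (i : ι) : Set X := {x | (e i x : ℝ) < 1 / 2}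
  have hU : TopologicalSpace.IsTopologicalBasis (range U) := by
    refine TopologicalSpace.isTopologicalBasis_of_isOpen_of_nhds ?_ fun x V hxV hV => ?_
    · rintro _ ⟨i, rfl⟩
      exact isOpen_lt (by fun_prop) continuous_const
    · obtain ⟨f, hf, hfx, hfV⟩ := CompletelyRegularSpace.completely_regular x Vᶜ hV.isClosed_compl
        (not_not.2 hxV)
      obtain ⟨i, hi⟩ := he.exists_dist_lt ⟨f, hf⟩ one_half_pos
      have hclose (y : X) : |(f y : ℝ) - e i y| < 1 / 2 :=
        (ContinuousMap.dist_apply_le_dist y).trans_lt hi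
      have hfx : (f x : ℝ) = 0 := congrArg Subtype.val hfx
      refine ⟨U i, mem_range_self i, ?_, fun y (hy : (e i y : ℝ) < 1 / 2) => ?_⟩
      · change (e i x : ℝ) < 1 / 2
        linarith [(abs_lt.1 (hclose x)).1]
      · by_contra hyV
        have hfy : (f y : ℝ) = 1 := congrArg Subtype.val (hfV hyV)
        linarith [(abs_lt.1 (hclose y)).2]
  exact (ciInf_le' _ ⟨_, hU⟩).trans Cardinal.mk_range_le

lemma mk_le_topWeight [Infinite ι] {A B : ι → Set X} (hA : ∀ i, IsCompact (A i))
    (hB : ∀ i, IsClosed (B i)) (hAB : ∀ i, Disjoint (A i) (B i))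
    (hne : Pairwise fun i j => (A i ∩ B j).Nonempty) : Cardinal.mk ι ≤ topWeight X := by
  have : Nonempty {𝓑 : Set (Set X) // TopologicalSpace.IsTopologicalBasis 𝓑} :=
    ⟨_, TopologicalSpace.isTopologicalBasis_opens⟩
  refine le_ciInf fun ⟨𝓑, h𝓑⟩ => ?_
  have hcover (i : ι) : ∃ F : Finset 𝓑, A i ⊆ ⋃ b ∈ F, (b : Set X) ∧
      Disjoint (⋃ b ∈ F, (b : Set X)) (B i) := by
    have hbasic : A i ⊆ ⋃ b ∈ {b : 𝓑 | Disjoint (b : Set X) (B i)}, (b : Set X) := fun x hx => by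
      obtain ⟨b, hb, hxb, hbB⟩ := h𝓑.exists_subset_of_mem_open
        (disjoint_left.1 (hAB i) hx) (hB i).isOpen_compl
      exact mem_biUnion (show ⟨b, hb⟩ ∈ _ from subset_compl_iff_disjoint_right.1 hbB) hxb
    obtain ⟨F, hF, hfin, hAF⟩ :=
      (hA i).elim_finite_subcover_image (fun b _ => h𝓑.isOpen b.2) hbasic
    refine ⟨hfin.toFinset, ?_⟩
    simp only [hfin.mem_toFinset, disjoint_iUnion_left]
    exact ⟨hAF, hF⟩
  choose F hAF hFB using hcover
  have hF : Function.Injective F := fun i j hij => by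
    by_contra hne_ij
    obtain ⟨x, hxA, hxB⟩ := hne hne_ij
    exact disjoint_left.1 (hFB j) (hij ▸ hAF i hxA) hxB
  have : Infinite 𝓑 := by
    by_contra hfin
    have := not_infinite_iff_finite.1 hfin
    exact not_finite_iff_infinite.2 ‹Infinite ι› (Finite.of_injective F hF)
  simpa only [Cardinal.mk_finset_of_infinite] using Cardinal.mk_le_of_injective hF

lemma mk_le_topWeight_of_surjective [CompactSpace X] [Infinite ι] {f : X → ι → unitInterval}
    (hf : Continuous f) (hsurj : Function.Surjective f) : Cardinal.mk ι ≤ topWeight X := by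
  classical
  have hclosed (i : ι) (c : unitInterval) : IsClosed {x | f x i = c} :=
    isClosed_eq (by fun_prop) continuous_const
  refine mk_le_topWeight (fun i => (hclosed i 0).isCompact) (fun i => hclosed i 1)
    (fun i => disjoint_left.2 fun x h₀ h₁ => zero_ne_one (h₀.symm.trans h₁)) fun i j hij => ?_
  obtain ⟨x, hx⟩ := hsurj (Pi.single j 1)
  exact ⟨x, by simp [hx, hij], by simp [hx]⟩

end Weight

theorem exists_hereditarilyIndecomposable_continuum_essential_map_general
    (A : Type u) [Infinite A] :
    ∃ (K : Type u) (_ : TopologicalSpace K), CompactSpace K ∧ T2Space K ∧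
      ConnectedSpace K ∧ Nonempty K ∧ HereditarilyIndecomposable K ∧
      topWeight K = Cardinal.mk A ∧
      ∃ f : K → (A → unitInterval), Continuous f ∧ Function.Surjective f ∧
        IsEssentialFamily (fun a => f ⁻¹' {x | x a = 0}) (fun a => f ⁻¹' {x | x a = 1}) := by
  have hcard : Cardinal.mk (A ⊕ A) ≤ Cardinal.mk A := by simp
  obtain ⟨e, he⟩ : ∃ e : A → C(A ⊕ A → unitInterval, unitInterval), DenseRange e :=
    exists_denseRange_continuousMap_unitInterval hcard continuous_id Function.injective_id
  obtain ⟨K, hKe, hK⟩ := (essentialOn_zigzagSet (ι := A) (e := e)).exists_minimal isClosed_zigzagSet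
  obtain ⟨hclosed, hess⟩ := hK.prop
  have : CompactSpace K := isCompact_iff_compactSpace.1 hclosed.isCompact
  obtain ⟨e', he'⟩ : ∃ e' : A → C(K, unitInterval), DenseRange e' :=
    exists_denseRange_continuousMap_unitInterval hcard continuous_subtype_val Subtype.val_injective
  let f : C(A ⊕ A → unitInterval, A → unitInterval) := ⟨fun x a => x (.inl a), by fun_prop⟩
  have hsurj : Function.Surjective (f.restrict K) := EssentialOn.surjective_restrict hess
  refine ⟨K, inferInstance, this, inferInstance,
    isConnected_iff_connectedSpace.1 (EssentialOn.isConnected_of_minimal hK),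
    hess.nonempty.to_subtype, hereditarilyIndecomposable_of_subset_zigzagSet he hclosed hKe,
    (topWeight_le_mk_of_denseRange he').antisymm
      (mk_le_topWeight_of_surjective (map_continuous _) hsurj),
    f.restrict K, map_continuous _, hsurj, ?_⟩
  exact hess.isEssentialFamily hclosed (fun a => isClosed_eq (by fun_prop) continuous_const)
    (fun a => isClosed_eq (by fun_prop) continuous_const)
    fun a => disjoint_left.2 fun x h₀ h₁ => zero_ne_one (h₀.symm.trans h₁)

/-- For every infinite cardinal `κ` there is a hereditarily indecomposable continuum of
weight `κ` admitting an essential map onto the Tychonoff cube `[0,1]^κ`. -/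
theorem exists_hereditarilyIndecomposable_continuum_essential_map
    (κ : Cardinal) (hκ : Cardinal.aleph0 ≤ κ) :
    ∃ (K : Type) (_ : TopologicalSpace K), CompactSpace K ∧ T2Space K ∧
      ConnectedSpace K ∧ Nonempty K ∧ HereditarilyIndecomposable K ∧ topWeight K = κ ∧
      ∃ f : K → (κ.out → unitInterval), Continuous f ∧ Function.Surjective f ∧
        IsEssentialFamily (fun α => f ⁻¹' {x | x α = 0}) (fun α => f ⁻¹' {x | x α = 1}) := by
  have : Infinite κ.out := Cardinal.infinite_iff.2 (by rwa [Cardinal.mk_out])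
  simpa only [Cardinal.mk_out] using
    exists_hereditarilyIndecomposable_continuum_essential_map_general κ.out
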